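/- arXiv:2006.15269 — 19 statements merged into one kernel-verified Lean document; each statement's English description precedes it below -/
import Mathlib

section
/- Let I : [0,1]² → [0,1] be a fuzzy implication and define A_I(x,y) = inf{z ∈ [0,1] : I(x,z) ≥ y}. Then the following three statements are equivalent: (i) I is right-continuous in its second variable; (ii) A_I and I satisfy the residuation property, i.e., for all x, y, z ∈ [0,1], A_I(x,z) ≤ y if and only if z ≤ I(x,y); (iii) for all x, y ∈ [0,1] the infimum defining A_I is attained, i.e., A_I(x,y) = min{z ∈ [0,1] : I(x,z) ≥ y}. -/
/-!
The implications proved are (i) ⇒ (iii) ⇔ (ii) ⇒ (i). Monotonicity makes `{z | y ≤ I(x,z)}` an upper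
set, nonempty because it contains `1`, with infimum `A_I(x,y)`. Right-continuity at the infimum puts
the infimum in the set; an attained infimum together with monotonicity is the residuation property.
Conversely, residuation says that `{w | I(x,w) < b}` is the open ray `w < A_I(x,b)`, so `I(x,·)` is
upper semicontinuous, and a nondecreasing upper semicontinuous function is right-continuous.
-/

instance : Fact ((0:ℝ) ≤ 1) := ⟨zero_le_one⟩

/-- The operation `A_I(x,y) = inf {z ∈ [0,1] | I(x,z) ≥ y}`. -/
noncomputable def coresid (Imp : unitInterval → unitInterval → unitInterval)
    (x y : unitInterval) : unitInterval :=
  sInf {z : unitInterval | y ≤ Imp x z}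

/-- Lemma 3.2: for a fuzzy implication `I`, the following are equivalent:
(i) `I` is right-continuous in its second variable;
(ii) `A_I` and `I` satisfy the residuation property;
(iii) the infimum defining `A_I(x,y)` is attained (i.e. is a minimum). -/
theorem stmt1 (Imp : unitInterval → unitInterval → unitInterval)
    (hImono₁ : ∀ y : unitInterval, Antitone fun x => Imp x y)
    (hImono₂ : ∀ x : unitInterval, Monotone (Imp x))
    (hI00 : Imp 0 0 = 1) (hI11 : Imp 1 1 = 1) (hI10 : Imp 1 0 = 0) :
    ((∀ (x z : unitInterval), z ≠ 1 → ContinuousWithinAt (Imp x) (Set.Ioi z) z)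
      ↔ (∀ x y z : unitInterval, coresid Imp x z ≤ y ↔ z ≤ Imp x y))
    ∧ ((∀ x y z : unitInterval, coresid Imp x z ≤ y ↔ z ≤ Imp x y)
      ↔ (∀ x y : unitInterval, IsLeast {z : unitInterval | y ≤ Imp x z} (coresid Imp x y))) := by
  -- Since `I(x,1) ≥ I(1,1) = 1`, the point `1` lies in every set whose infimum is taken.
  have htop : ∀ x y, y ≤ Imp x 1 := fun x y =>
    calc y ≤ 1 := unitInterval.le_one y
      _ = Imp 1 1 := hI11.symm
      _ ≤ Imp x 1 := hImono₁ 1 (show x ≤ 1 from unitInterval.le_one x)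
  have hglb : ∀ x y, IsGLB {z : unitInterval | y ≤ Imp x z} (coresid Imp x y) :=
    fun x y => isGLB_csInf ⟨1, htop x y⟩ (OrderBot.bddBelow _)
  have h_attained_of_cont :
      (∀ (x z : unitInterval), z ≠ 1 → ContinuousWithinAt (Imp x) (Set.Ioi z) z) →
      ∀ x y : unitInterval, IsLeast {z : unitInterval | y ≤ Imp x z} (coresid Imp x y) := by
    intro hcont x y
    refine ⟨?_, (hglb x y).1⟩
    by_cases hc : coresid Imp x y = 1
    · rw [hc]
      exact htop x y
    · have hlt : coresid Imp x y < 1 := lt_of_le_of_ne (unitInterval.le_one _) hc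
      have : (nhdsWithin (coresid Imp x y) (Set.Ioi (coresid Imp x y))).NeBot :=
        nhdsGT_neBot_of_exists_gt ⟨1, hlt⟩
      refine ge_of_tendsto (hcont x _ hc) ?_
      filter_upwards [self_mem_nhdsWithin] with w hw
      obtain ⟨v, hv, -, hvw⟩ := (hglb x y).exists_between hw
      exact le_trans hv (hImono₂ x hvw.le)
  have h_resid_of_attained :
      (∀ x y : unitInterval, IsLeast {z : unitInterval | y ≤ Imp x z} (coresid Imp x y)) →
      ∀ x y z : unitInterval, coresid Imp x z ≤ y ↔ z ≤ Imp x y := fun h x y z =>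
    ⟨fun hle => le_trans (h x z).1 (hImono₂ x hle), fun hz => (h x z).2 hz⟩
  have h_attained_of_resid :
      (∀ x y z : unitInterval, coresid Imp x z ≤ y ↔ z ≤ Imp x y) →
      ∀ x y : unitInterval, IsLeast {z : unitInterval | y ≤ Imp x z} (coresid Imp x y) :=
    fun h x y => ⟨(h x _ y).1 le_rfl, (hglb x y).1⟩
  have h_cont_of_resid :
      (∀ x y z : unitInterval, coresid Imp x z ≤ y ↔ z ≤ Imp x y) →
      ∀ (x z : unitInterval), z ≠ 1 → ContinuousWithinAt (Imp x) (Set.Ioi z) z := by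
    intro h x z _
    refine tendsto_order.2 ⟨fun a ha => ?_, fun b hb => ?_⟩
    · filter_upwards [self_mem_nhdsWithin] with w hw
      exact lt_of_lt_of_le ha (hImono₂ x (le_of_lt hw))
    · -- Residuation turns `I(x,z) < b` into `z < A_I(x,b)`, and `I(x,w) < b` for `w < A_I(x,b)`.
      have hz : z < coresid Imp x b := by
        rw [← not_le, h, not_le]
        exact hb
      filter_upwards [mem_nhdsWithin_of_mem_nhds (Iio_mem_nhds hz)] with w hw
      rw [← not_le, ← h, not_le]
      exact hw
  exact ⟨⟨fun h => h_resid_of_attained (h_attained_of_cont h), h_cont_of_resid⟩,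
    h_attained_of_resid, h_resid_of_attained⟩
end

section
/- Let I : [0,1]² → [0,1] be a fuzzy implication satisfying I(1,y) < 1 for all y ∈ [0,1). Then the function A_I : [0,1]² → [0,1] defined by A_I(x,y) = inf{z ∈ [0,1] : I(x,z) ≥ y} is a binary aggregation function, i.e., A_I is nondecreasing in each variable and A_I(0,0) = 0 and A_I(1,1) = 1. -/
/-- Lemma 3.3: if the fuzzy implication `I` satisfies `I(1,y) < 1` for all `y ∈ [0,1)`,
then `A_I` is a binary aggregation function: nondecreasing in each variable with
`A_I(0,0) = 0` and `A_I(1,1) = 1`. -/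
theorem stmt2 (Imp : unitInterval → unitInterval → unitInterval)
    (hImono₁ : ∀ y : unitInterval, Antitone fun x => Imp x y)
    (hImono₂ : ∀ x : unitInterval, Monotone (Imp x))
    (hI00 : Imp 0 0 = 1) (hI11 : Imp 1 1 = 1) (hI10 : Imp 1 0 = 0)
    (hlt : ∀ y : unitInterval, y < 1 → Imp 1 y < 1) :
    (∀ y : unitInterval, Monotone fun x => coresid Imp x y)
    ∧ (∀ x : unitInterval, Monotone (coresid Imp x))
    ∧ coresid Imp 0 0 = 0 ∧ coresid Imp 1 1 = 1 := by
  refine ⟨fun y a b hab => ?_, fun x a b hab => ?_, ?_, ?_⟩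
  · exact sInf_le_sInf fun z hz => le_trans hz (hImono₁ z hab)
  · exact sInf_le_sInf fun z hz => le_trans hab hz
  · exact le_antisymm (sInf_le (zero_le (a := Imp 0 0))) bot_le
  · refine le_antisymm le_top (le_sInf fun z hz => ?_)
    -- `1 ≤ I(1,z)` excludes `z < 1`, so the infimum runs over `{1}`.
    by_contra h
    exact absurd (hlt z (not_le.mp h)) (not_lt.mpr hz)
end

section
/- Let I : [0,1]² → [0,1] be a fuzzy implication that is right-continuous in its second variable, and define A_I(x,y) = inf{z ∈ [0,1] : I(x,z) ≥ y}. Then A_I preserves arbitrary suprema in its second variable: for every x ∈ [0,1] and every nonempty family (y_i)_{i ∈ S} of points of [0,1], A_I(x, sup_{i∈S} y_i) = sup_{i∈S} A_I(x, y_i); in particular A_I is left-continuous in its second variable. -/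
/-- `A_I(x,·)` is the lower adjoint of `I(x,·)`. The value `I(x,1) = 1` covers `z = 1`, where
right-continuity says nothing. -/
lemma coresid_gc (Imp : unitInterval → unitInterval → unitInterval) (x : unitInterval)
    (hmono : Monotone (Imp x)) (h1 : Imp x 1 = 1)
    (hrc : ∀ z : unitInterval, z ≠ 1 → ContinuousWithinAt (Imp x) (Set.Ioi z) z) :
    GaloisConnection (coresid Imp x) (Imp x) := by
  intro y z
  refine ⟨fun h => ?_, fun h => sInf_le h⟩
  by_cases hz : z = 1
  · rw [hz, h1]
    exact unitInterval.le_one'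
  have hlt : z < 1 := lt_of_le_of_ne unitInterval.le_one' hz
  have : (nhdsWithin z (Set.Ioi z)).NeBot := nhdsGT_neBot_of_exists_gt ⟨1, hlt⟩
  refine ge_of_tendsto (hrc z hz) ?_
  filter_upwards [self_mem_nhdsWithin] with w hw
  obtain ⟨s, hs, hsw⟩ := sInf_lt_iff.1 (lt_of_le_of_lt h hw)
  exact le_trans hs (hmono hsw.le)

/-- (From the proof of Theorem 3.4.)  If the fuzzy implication `I` is right-continuous in
its second variable, then `A_I` preserves arbitrary nonempty suprema in its second
variable; in particular `A_I` is left-continuous in its second variable. -/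
theorem stmt3 (Imp : unitInterval → unitInterval → unitInterval)
    (hImono₁ : ∀ y : unitInterval, Antitone fun x => Imp x y)
    (hImono₂ : ∀ x : unitInterval, Monotone (Imp x))
    (hI00 : Imp 0 0 = 1) (hI11 : Imp 1 1 = 1) (hI10 : Imp 1 0 = 0)
    (hrc : ∀ (x z : unitInterval), z ≠ 1 → ContinuousWithinAt (Imp x) (Set.Ioi z) z) :
    (∀ (x : unitInterval) (ι : Type) [Nonempty ι] (f : ι → unitInterval),
      coresid Imp x (⨆ i, f i) = ⨆ i, coresid Imp x (f i))
    ∧ (∀ (x z : unitInterval), z ≠ 0 → ContinuousWithinAt (coresid Imp x) (Set.Iio z) z) := by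
  have gc : ∀ x, GaloisConnection (coresid Imp x) (Imp x) := fun x =>
    coresid_gc Imp x (hImono₂ x)
      (le_antisymm unitInterval.le_one' (hI11.symm.le.trans (hImono₁ 1 unitInterval.le_one'))) (hrc x)
  refine ⟨fun x ι _ f => (gc x).l_iSup, fun x z _ => ?_⟩
  refine tendsto_order.2 ⟨fun a ha => ?_, fun a ha => ?_⟩
  · have hz : Imp x a < z := (gc x).lt_iff_lt.1 ha
    filter_upwards [nhdsWithin_le_nhds (lt_mem_nhds hz)] with y hy
    exact (gc x).lt_iff_lt.2 hy
  · filter_upwards [self_mem_nhdsWithin] with y hy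
    exact lt_of_le_of_lt ((gc x).monotone_l (le_of_lt hy)) ha
end

section
/- Let I : [0,1]² → [0,1] be a fuzzy implication that is right-continuous in its second variable, and define A_I(x,y) = inf{z ∈ [0,1] : I(x,z) ≥ y}. Then I coincides with the residual operation of A_I: for all x, y ∈ [0,1], the set {z ∈ [0,1] : A_I(x,z) ≤ y} has a maximum and I(x,y) = max{z ∈ [0,1] : A_I(x,z) ≤ y}. -/
/-- Theorem 3.4: if a fuzzy implication `I` is right-continuous in its second variable,
then `I = I_{A_I}`: for all `x, y`, the set `{z | A_I(x,z) ≤ y}` has a maximum and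
`I(x,y) = max {z | A_I(x,z) ≤ y}`. -/
theorem stmt4 (Imp : unitInterval → unitInterval → unitInterval)
    (hImono₁ : ∀ y : unitInterval, Antitone fun x => Imp x y)
    (hImono₂ : ∀ x : unitInterval, Monotone (Imp x))
    (hI00 : Imp 0 0 = 1) (hI11 : Imp 1 1 = 1) (hI10 : Imp 1 0 = 0)
    (hrc : ∀ (x z : unitInterval), z ≠ 1 → ContinuousWithinAt (Imp x) (Set.Ioi z) z) :
    ∀ x y : unitInterval,
      IsGreatest {z : unitInterval | coresid Imp x z ≤ y} (Imp x y) := by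
  intro x y
  refine ⟨sInf_le (α := unitInterval) (show Imp x y ≤ Imp x y from le_rfl), fun z hz => ?_⟩
  by_cases hy : y = 1
  · subst hy
    have h1 : Imp x 1 = 1 :=
      le_antisymm unitInterval.le_one' (hI11.symm.le.trans (hImono₁ 1 unitInterval.le_one'))
    rw [h1]
    exact unitInterval.le_one'
  · have hlt : y < 1 := lt_of_le_of_ne unitInterval.le_one' hy
    have : (nhdsWithin y (Set.Ioi y)).NeBot := nhdsGT_neBot_of_exists_gt ⟨1, hlt⟩
    -- Every `w > y` exceeds the infimum `A_I(x,z)`, so monotonicity gives `z ≤ I(x,w)`;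
    -- right-continuity then lets `w` decrease to `y`.
    refine ge_of_tendsto (hrc x y hy) ?_
    filter_upwards [self_mem_nhdsWithin] with w hw
    obtain ⟨v, hv, hvw⟩ := (sInf_lt_iff (α := unitInterval)).mp
      (lt_of_le_of_lt (show coresid Imp x z ≤ y from hz) (show y < w from hw))
    exact le_trans hv (hImono₂ x hvw.le)
end

section
/- Let I : [0,1]² → [0,1] be a fuzzy implication such that the function f(y) = I(1,y) is strictly increasing on [0,1], and let A_I(x,y) = inf{z ∈ [0,1] : I(x,z) ≥ y}. Let U and V be nonempty sets, D, D' fuzzy sets on U and B a fuzzy set on V, and define the ACRI output B'(y) = sup_{x ∈ U} A_I(D'(x), I(D(x), B(y))). If D' is normal, then B ⊆ B', i.e., B(y) ≤ B'(y) for all y ∈ V. -/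
/-- Theorem 4.2(i): if `I` is a fuzzy implication with `f(y) = I(1,y)` strictly
increasing, `D'` is normal, then the ACRI output
`B'(y) = sup_x A_I(D'(x), I(D(x), B(y)))` satisfies (GMP1): `B ⊆ B'`. -/
theorem stmt5 (Imp : unitInterval → unitInterval → unitInterval)
    (hImono₁ : ∀ y : unitInterval, Antitone fun x => Imp x y)
    (hImono₂ : ∀ x : unitInterval, Monotone (Imp x))
    (hI00 : Imp 0 0 = 1) (hI11 : Imp 1 1 = 1) (hI10 : Imp 1 0 = 0)
    (hstrict : StrictMono fun y : unitInterval => Imp 1 y)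
    (U V : Type) [Nonempty U] [Nonempty V]
    (D D' : U → unitInterval) (B : V → unitInterval)
    (hD' : ∃ x₀ : U, D' x₀ = 1) :
    ∀ y : V, B y ≤ ⨆ x : U, coresid Imp (D' x) (Imp (D x) (B y)) := by
  intro y
  obtain ⟨x₀, hx₀⟩ := hD'
  refine le_trans ?_ (le_iSup (fun x : U => coresid Imp (D' x) (Imp (D x) (B y))) x₀)
  simp only [coresid, hx₀]
  refine le_sInf fun z hz => ?_
  -- `I(1, B y) ≤ I(D x₀, B y) ≤ I(1, z)`, and the strictly increasing `I(1, ·)` reflects order.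
  exact hstrict.le_iff_le.mp ((hImono₁ (B y) unitInterval.le_one').trans hz)
end

section
/- Let I : [0,1]² → [0,1] be a fuzzy implication such that the function f(y) = I(1,y) is strictly increasing on [0,1], and let A_I(x,y) = inf{z ∈ [0,1] : I(x,z) ≥ y}. Let U and V be nonempty sets, D a fuzzy set on U with complement D^C(x) = 1 − D(x), and B a fuzzy set on V. If D^C is normal, then the ACRI output with input D^C satisfies B'(y) = sup_{x ∈ U} A_I(D^C(x), I(D(x), B(y))) = 1 for all y ∈ V. -/
/-- Theorem 4.2(iii): if `I` is a fuzzy implication with `f(y) = I(1,y)` strictly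
increasing and the complement `D^C` is normal, then the ACRI output with input `D^C`
satisfies (GMP3): `B'(y) = sup_x A_I(D^C(x), I(D(x), B(y))) = 1` for all `y`. -/
theorem stmt6 (Imp : unitInterval → unitInterval → unitInterval)
    (hImono₁ : ∀ y : unitInterval, Antitone fun x => Imp x y)
    (hImono₂ : ∀ x : unitInterval, Monotone (Imp x))
    (hI00 : Imp 0 0 = 1) (hI11 : Imp 1 1 = 1) (hI10 : Imp 1 0 = 0)
    (hstrict : StrictMono fun y : unitInterval => Imp 1 y)
    (U V : Type) [Nonempty U] [Nonempty V]
    (D : U → unitInterval) (B : V → unitInterval)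
    (hDC : ∃ x₀ : U, unitInterval.symm (D x₀) = 1) :
    ∀ y : V, (⨆ x : U, coresid Imp (unitInterval.symm (D x)) (Imp (D x) (B y))) = 1 := by
  intro y
  obtain ⟨x₀, hx₀⟩ := hDC
  have hD : D x₀ = 0 := by
    rw [← unitInterval.symm_symm (D x₀), hx₀, unitInterval.symm_one]
  have h0 : Imp 0 (B y) = 1 :=
    le_antisymm unitInterval.le_one' (hI00 ▸ hImono₂ 0 unitInterval.nonneg')
  have h1 : coresid Imp 1 1 = 1 := by
    refine le_antisymm unitInterval.le_one' (le_sInf fun z hz => ?_)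
    -- strictness of `I(1, ·)` leaves `z = 1` as the only solution of `1 ≤ I(1, z)`
    exact hstrict.le_iff_le.1 (hI11.le.trans hz)
  refine le_antisymm unitInterval.le_one' ?_
  calc (1 : unitInterval)
      = coresid Imp (unitInterval.symm (D x₀)) (Imp (D x₀) (B y)) := by
        rw [hx₀, hD, h0, h1]
    _ ≤ _ := le_iSup (fun x => coresid Imp (unitInterval.symm (D x)) (Imp (D x) (B y))) x₀
end

section
/- Let I : [0,1]² → [0,1] be a fuzzy implication such that the function f(y) = I(1,y) is strictly increasing on [0,1], and let A_I(x,y) = inf{z ∈ [0,1] : I(x,z) ≥ y}. Let U and V be nonempty sets, D a normal fuzzy set on U and B a fuzzy set on V. Then the ACRI output with input D' = D reproduces B exactly: sup_{x ∈ U} A_I(D(x), I(D(x), B(y))) = B(y) for all y ∈ V. -/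
/-- Theorem 4.2(iv): if `I` is a fuzzy implication with `f(y) = I(1,y)` strictly
increasing and `D` is normal, then the ACRI output with input `D' = D` satisfies
(GMP4): `sup_x A_I(D(x), I(D(x), B(y))) = B(y)` for all `y`. -/
theorem stmt7 (Imp : unitInterval → unitInterval → unitInterval)
    (hImono₁ : ∀ y : unitInterval, Antitone fun x => Imp x y)
    (hImono₂ : ∀ x : unitInterval, Monotone (Imp x))
    (hI00 : Imp 0 0 = 1) (hI11 : Imp 1 1 = 1) (hI10 : Imp 1 0 = 0)
    (hstrict : StrictMono fun y : unitInterval => Imp 1 y)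
    (U V : Type) [Nonempty U] [Nonempty V]
    (D : U → unitInterval) (B : V → unitInterval)
    (hD : ∃ x₀ : U, D x₀ = 1) :
    ∀ y : V, (⨆ x : U, coresid Imp (D x) (Imp (D x) (B y))) = B y := by
  intro y
  apply le_antisymm
  · -- `B y` itself belongs to the set whose infimum is taken.
    exact iSup_le fun x => sInf_le (le_refl (Imp (D x) (B y)))
  · obtain ⟨x₀, hx₀⟩ := hD
    -- At `D x₀ = 1`, strictness makes `Imp 1 (B y) ≤ Imp 1 z` equivalent to `B y ≤ z`.
    refine le_trans ?_ (le_iSup (fun x => coresid Imp (D x) (Imp (D x) (B y))) x₀)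
    simp only [hx₀]
    exact le_sInf fun z hz => hstrict.le_iff_le.mp hz
end

section
/- Let A : [0,1]² → [0,1] be a binary aggregation function that is left-continuous in its second variable, has 1 as a left neutral element (A(1,x) = x for all x ∈ [0,1]), and satisfies A(0,y) = 0 for all y ∈ [0,1). Let I_A(x,y) = sup{z ∈ [0,1] : A(x,z) ≤ y}. Let U, V be nonempty sets, D, D', D'' fuzzy sets on U and B a fuzzy set on V, and define B'(y) = sup_{x ∈ U} A(D'(x), I_A(D(x), B(y))) (and B'' analogously from D''). Then: (GMP1) if D' is normal then B(y) ≤ B'(y) for all y; (GMP2) if D' ⊆ D'' then B' ⊆ B''; (GMP3) if D' = D^C (where D^C(x) = 1 − D(x)) and D^C is normal then B'(y) = 1 for all y; (GMP4) if D' = D and D is normal then B' = B. -/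
/-- The residual operation `I_A(x,y) = sup {z ∈ [0,1] | A(x,z) ≤ y}`. -/
noncomputable def resid (A : unitInterval → unitInterval → unitInterval)
    (x y : unitInterval) : unitInterval :=
  sSup {z : unitInterval | A x z ≤ y}

theorem le_resid {A : unitInterval → unitInterval → unitInterval}
    (hAmono₁ : ∀ y : unitInterval, Monotone fun x => A x y)
    (hneut : ∀ x : unitInterval, A 1 x = x) (x y : unitInterval) : y ≤ resid A x y :=
  le_sSup ((hAmono₁ y unitInterval.le_one').trans_eq (hneut y))

/-- The supremum defining `I_A(x,y)` is attained. -/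
theorem apply_resid_le {A : unitInterval → unitInterval → unitInterval}
    (hAmono₁ : ∀ y : unitInterval, Monotone fun x => A x y)
    (hAmono₂ : ∀ x : unitInterval, Monotone (A x))
    (hlc : ∀ (x z : unitInterval), z ≠ 0 → ContinuousWithinAt (A x) (Set.Iio z) z)
    (hneut : ∀ x : unitInterval, A 1 x = x) (x y : unitInterval) :
    A x (resid A x y) ≤ y := by
  by_cases h0 : resid A x y = 0
  · rw [h0]
    exact ((hAmono₁ 0 unitInterval.le_one').trans_eq (hneut 0)).trans unitInterval.nonneg'
  · have hpos : 0 < resid A x y := unitInterval.pos_iff_ne_zero.2 h0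
    have : (nhdsWithin (resid A x y) (Set.Iio (resid A x y))).NeBot :=
      nhdsLT_neBot_of_exists_lt ⟨0, hpos⟩
    refine le_of_tendsto (hlc x _ h0) ?_
    filter_upwards [self_mem_nhdsWithin] with z hz
    obtain ⟨w, hw, hzw⟩ := lt_sSup_iff.1 (show z < sSup {z | A x z ≤ y} from hz)
    exact (hAmono₂ x hzw.le).trans hw

theorem resid_zero_left {A : unitInterval → unitInterval → unitInterval}
    (hzero : ∀ y : unitInterval, y < 1 → A 0 y = 0) (y : unitInterval) : resid A 0 y = 1 := by
  refine le_antisymm unitInterval.le_one' (le_of_forall_lt fun c hc => ?_)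
  obtain ⟨d, hcd, hd⟩ := exists_between hc
  refine hcd.trans_le (le_sSup ?_)
  exact (hzero d hd).trans_le unitInterval.nonneg'

/-- Theorem 4.6: let `A` be an aggregation function that is left-continuous in the
second variable, has `1` as a left neutral element and satisfies `A(0,y) = 0` for
`y < 1`.  Then the ACRI method built from `A` and `I_A` satisfies (GMP1)–(GMP4). -/
theorem stmt8 (A : unitInterval → unitInterval → unitInterval)
    (hAmono₁ : ∀ y : unitInterval, Monotone fun x => A x y)
    (hAmono₂ : ∀ x : unitInterval, Monotone (A x))
    (hA00 : A 0 0 = 0) (hA11 : A 1 1 = 1)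
    (hlc : ∀ (x z : unitInterval), z ≠ 0 → ContinuousWithinAt (A x) (Set.Iio z) z)
    (hneut : ∀ x : unitInterval, A 1 x = x)
    (hzero : ∀ y : unitInterval, y < 1 → A 0 y = 0)
    (U V : Type) [Nonempty U] [Nonempty V]
    (D D' D'' : U → unitInterval) (B : V → unitInterval) :
    -- (GMP1)
    ((∃ x₀ : U, D' x₀ = 1) →
      ∀ y : V, B y ≤ ⨆ x : U, A (D' x) (resid A (D x) (B y)))
    -- (GMP2)
    ∧ ((∀ x : U, D' x ≤ D'' x) →
      ∀ y : V, (⨆ x : U, A (D' x) (resid A (D x) (B y)))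
        ≤ ⨆ x : U, A (D'' x) (resid A (D x) (B y)))
    -- (GMP3)
    ∧ ((D' = fun x => unitInterval.symm (D x)) → (∃ x₀ : U, D' x₀ = 1) →
      ∀ y : V, (⨆ x : U, A (D' x) (resid A (D x) (B y))) = 1)
    -- (GMP4)
    ∧ (D' = D → (∃ x₀ : U, D x₀ = 1) →
      ∀ y : V, (⨆ x : U, A (D' x) (resid A (D x) (B y))) = B y) := by
  have key : ∀ E : U → unitInterval, (∃ x₀ : U, E x₀ = 1) →
      ∀ y : V, B y ≤ ⨆ x : U, A (E x) (resid A (D x) (B y)) := by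
    rintro E ⟨x₀, hx₀⟩ y
    refine le_trans ?_ (le_iSup _ x₀)
    rw [hx₀, hneut]
    exact le_resid hAmono₁ hneut _ _
  refine ⟨key D', fun h y => iSup_mono fun x => hAmono₁ _ (h x), ?_, ?_⟩
  · rintro rfl ⟨x₀, hx₀⟩ y
    refine le_antisymm unitInterval.le_one' (le_trans ?_ (le_iSup _ x₀))
    have hD : D x₀ = 0 := unitInterval.symm_eq_one.1 hx₀
    rw [hx₀, hneut, hD, resid_zero_left hzero]
  · rintro rfl hn y
    exact le_antisymm (iSup_le fun x => apply_resid_le hAmono₁ hAmono₂ hlc hneut _ _)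
      (key _ hn y)
end

section
/- Let A : [0,1]² → [0,1] be a binary aggregation function that is left-continuous in its second variable and has 1 as a left neutral element (A(1,x) = x for all x), and let I be a fuzzy implication satisfying (NP) (I(1,y) = y for all y). Define I_A(x,y) = sup{z ∈ [0,1] : A(x,z) ≤ y}. Then the following are equivalent: (a) for all nonempty sets U, V and all fuzzy sets D, D', D'' on U and B on V, the ACRI output B'(y) = sup_{x ∈ U} A(D'(x), I(D(x), B(y))) satisfies (GMP1) if D' is normal then B ⊆ B', (GMP2) if D' ⊆ D'' then B' ⊆ B'', (GMP3) if D' = D^C is normal then B' ≡ 1, and (GMP4) if D' = D is normal then B' = B; (b) I(x,y) ≤ I_A(x,y) for all x, y ∈ [0,1]. -/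
/-- The nontrivial half of the residuation property. At `z = 0`, where left-continuity says
nothing, the bound comes from `A x 0 ≤ A 1 0 = 0`. -/
lemma le_of_le_resid (A : unitInterval → unitInterval → unitInterval)
    (hAmono₁ : ∀ y : unitInterval, Monotone fun x => A x y)
    (hAmono₂ : ∀ x : unitInterval, Monotone (A x))
    (hlc : ∀ (x z : unitInterval), z ≠ 0 → ContinuousWithinAt (A x) (Set.Iio z) z)
    (hneut : ∀ x : unitInterval, A 1 x = x)
    {x y z : unitInterval} (h : z ≤ resid A x y) : A x z ≤ y := by
  by_cases hz : z = 0
  · subst hz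
    calc A x 0 ≤ A 1 0 := hAmono₁ 0 unitInterval.le_one'
      _ = 0 := hneut 0
      _ ≤ y := unitInterval.nonneg'
  · have hpos : 0 < z := unitInterval.pos_iff_ne_zero.mpr hz
    have : (nhdsWithin z (Set.Iio z)).NeBot := nhdsLT_neBot_of_exists_lt ⟨0, hpos⟩
    refine le_of_tendsto (hlc x z hz) ?_
    filter_upwards [self_mem_nhdsWithin] with w hw
    obtain ⟨s, hs, hws⟩ := lt_sSup_iff.mp (lt_of_lt_of_le hw h)
    exact (hAmono₂ x hws.le).trans hs

/-- Theorem 4.7: let `A` be an aggregation function that is left-continuous in its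
second variable with left neutral element `1`, and `I` a fuzzy implication satisfying
(NP).  Then the ACRI method based on `A` and `I` satisfies (GMP1)–(GMP4) if and only
if `I ≤ I_A`. -/
theorem stmt9 (A : unitInterval → unitInterval → unitInterval)
    (hAmono₁ : ∀ y : unitInterval, Monotone fun x => A x y)
    (hAmono₂ : ∀ x : unitInterval, Monotone (A x))
    (hA00 : A 0 0 = 0) (hA11 : A 1 1 = 1)
    (hlc : ∀ (x z : unitInterval), z ≠ 0 → ContinuousWithinAt (A x) (Set.Iio z) z)
    (hneut : ∀ x : unitInterval, A 1 x = x)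
    (Imp : unitInterval → unitInterval → unitInterval)
    (hImono₁ : ∀ y : unitInterval, Antitone fun x => Imp x y)
    (hImono₂ : ∀ x : unitInterval, Monotone (Imp x))
    (hI00 : Imp 0 0 = 1) (hI11 : Imp 1 1 = 1) (hI10 : Imp 1 0 = 0)
    (hNP : ∀ y : unitInterval, Imp 1 y = y) :
    (∀ (U V : Type), Nonempty U → Nonempty V →
      ∀ (D D' D'' : U → unitInterval) (B : V → unitInterval),
        -- (GMP1)
        ((∃ x₀ : U, D' x₀ = 1) →
          ∀ y : V, B y ≤ ⨆ x : U, A (D' x) (Imp (D x) (B y)))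
        -- (GMP2)
        ∧ ((∀ x : U, D' x ≤ D'' x) →
          ∀ y : V, (⨆ x : U, A (D' x) (Imp (D x) (B y)))
            ≤ ⨆ x : U, A (D'' x) (Imp (D x) (B y)))
        -- (GMP3)
        ∧ ((D' = fun x => unitInterval.symm (D x)) → (∃ x₀ : U, D' x₀ = 1) →
          ∀ y : V, (⨆ x : U, A (D' x) (Imp (D x) (B y))) = 1)
        -- (GMP4)
        ∧ (D' = D → (∃ x₀ : U, D x₀ = 1) →
          ∀ y : V, (⨆ x : U, A (D' x) (Imp (D x) (B y))) = B y))
    ↔ (∀ x y : unitInterval, Imp x y ≤ resid A x y) := by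
  constructor
  · intro h x y
    obtain ⟨-, -, -, h4⟩ := h unitInterval Unit ⟨0⟩ ⟨()⟩ id id id (fun _ => y)
    refine le_sSup ?_
    have h5 := h4 rfl ⟨1, rfl⟩ ()
    exact (le_iSup (fun x : unitInterval => A (id x) (Imp (id x) y)) x).trans h5.le
  · intro h U V _ _ D D' D'' B
    have gmp1 : ∀ E : U → unitInterval, (∃ x₀ : U, E x₀ = 1) →
        ∀ y : V, B y ≤ ⨆ x : U, A (E x) (Imp (D x) (B y)) := by
      rintro E ⟨x₀, hx₀⟩ y
      refine le_trans ?_ (le_iSup (fun x : U => A (E x) (Imp (D x) (B y))) x₀)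
      simp only [hx₀, hneut]
      calc B y = Imp 1 (B y) := (hNP _).symm
        _ ≤ Imp (D x₀) (B y) := hImono₁ (B y) unitInterval.le_one'
    refine ⟨gmp1 D', fun hD y => iSup_mono fun x => hAmono₁ _ (hD x), ?_, ?_⟩
    · rintro rfl ⟨x₀, hx₀⟩ y
      refine le_antisymm unitInterval.le_one' ?_
      refine le_trans ?_
        (le_iSup (fun x : U => A (unitInterval.symm (D x)) (Imp (D x) (B y))) x₀)
      have hD0 : D x₀ = 0 := by simpa using hx₀
      simp only [hD0, unitInterval.symm_zero, hneut]
      calc (1 : unitInterval) = Imp 0 0 := hI00.symm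
        _ ≤ Imp 0 (B y) := hImono₂ 0 unitInterval.nonneg'
    · rintro rfl hx y
      exact le_antisymm
        (iSup_le fun x => le_of_le_resid A hAmono₁ hAmono₂ hlc hneut (h _ _))
        (gmp1 D' hx y)
end

section
/- Let U, V be nonempty sets and x₀ ∈ U. Let m ≥ 3 and let D_1, …, D_m be fuzzy sets on U such that for every x ∈ U there exists j with D_j(x) = 0 (as holds when the antecedent fuzzy sets of a complete fuzzy rule base with more than two rules form a Ruspini partition). Let B_1, …, B_m be fuzzy sets on V, let T be a t-norm, let A be a binary aggregation function having 0 as an annihilator (A(0,x) = A(x,0) = 0 for all x), let 𝒜 be an m-ary aggregation function having 0 as an annihilator (𝒜(y_1,…,y_m) = 0 whenever some y_j = 0), and let D' be the crisp singleton at x₀ (D'(x₀) = 1 and D'(x) = 0 for x ≠ x₀). Then both inference outputs vanish identically: B'_FITA(y) = 𝒜( sup_{x∈U} A(D'(x), T(D_1(x), B_1(y))), …, sup_{x∈U} A(D'(x), T(D_m(x), B_m(y))) ) = 0 and B'_FATI(y) = sup_{x∈U} A(D'(x), 𝒜(T(D_1(x), B_1(y)), …, T(D_m(x), B_m(y))))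 = 0 for all y ∈ V. -/
/-- Lemma 4.8: with more than two rules whose antecedents always vanish somewhere
(as for a complete Ruspini partition), a t-norm `T` interpreting the rules, and
aggregation functions `A`, `𝒜` both having annihilator `0`, for a crisp singleton
input both the FITA and FATI outputs are identically `0`. -/
theorem stmt10 (U V : Type) [Nonempty U] [Nonempty V] (x₀ : U)
    (m : ℕ) (hm : 3 ≤ m)
    (D : Fin m → U → unitInterval) (hD : ∀ x : U, ∃ j : Fin m, D j x = 0)
    (B : Fin m → V → unitInterval)
    -- `T` is a t-norm
    (T : unitInterval → unitInterval → unitInterval)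
    (hTcomm : ∀ x y : unitInterval, T x y = T y x)
    (hTassoc : ∀ x y z : unitInterval, T x (T y z) = T (T x y) z)
    (hTmono₁ : ∀ y : unitInterval, Monotone fun x => T x y)
    (hTmono₂ : ∀ x : unitInterval, Monotone (T x))
    (hTneut : ∀ x : unitInterval, T x 1 = x)
    -- `A` is a binary aggregation function with annihilator `0`
    (A : unitInterval → unitInterval → unitInterval)
    (hAmono₁ : ∀ y : unitInterval, Monotone fun x => A x y)
    (hAmono₂ : ∀ x : unitInterval, Monotone (A x))
    (hA00 : A 0 0 = 0) (hA11 : A 1 1 = 1)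
    (hAann : ∀ x : unitInterval, A 0 x = 0 ∧ A x 0 = 0)
    -- `𝒜` is an `m`-ary aggregation function with annihilator `0`
    (Am : (Fin m → unitInterval) → unitInterval)
    (hAmmono : ∀ v w : Fin m → unitInterval, (∀ j, v j ≤ w j) → Am v ≤ Am w)
    (hAm0 : Am (fun _ => 0) = 0) (hAm1 : Am (fun _ => 1) = 1)
    (hAmann : ∀ v : Fin m → unitInterval, (∃ j, v j = 0) → Am v = 0)
    -- `D'` is the crisp singleton at `x₀`
    (D' : U → unitInterval) (hD'1 : D' x₀ = 1) (hD'0 : ∀ x : U, x ≠ x₀ → D' x = 0) :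
    (∀ y : V, Am (fun j => ⨆ x : U, A (D' x) (T (D j x) (B j y))) = 0)
    ∧ (∀ y : V, (⨆ x : U, A (D' x) (Am (fun j => T (D j x) (B j y)))) = 0) := by
  have hT0 : ∀ b, T 0 b = 0 := fun b =>
    le_antisymm ((hTmono₂ 0 unitInterval.le_one').trans_eq (hTneut 0)) unitInterval.nonneg'
  refine ⟨fun y => ?_, fun y => ?_⟩
  · -- A rule that does not fire at `x₀` contributes the supremum of the zero function:
    -- off `x₀` the input `D'` vanishes, and at `x₀` the antecedent does.
    obtain ⟨j, hj⟩ := hD x₀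
    refine hAmann _ ⟨j, ?_⟩
    have h : ∀ x, A (D' x) (T (D j x) (B j y)) = 0 := fun x => by
      by_cases hx : x = x₀
      · rw [hx, hj, hT0, (hAann _).2]
      · rw [hD'0 x hx, (hAann _).1]
    simp only [h, ciSup_const]
  · -- At every `x` some rule does not fire, so the aggregated rule base is zero there.
    have h : ∀ x, A (D' x) (Am (fun j => T (D j x) (B j y))) = 0 := fun x => by
      obtain ⟨j, hj⟩ := hD x
      rw [hAmann _ ⟨j, by rw [hj, hT0]⟩, (hAann _).2]
    simp only [h, ciSup_const]
end

section
/- Let U be a nonempty set, S a similarity measure on U, A : [0,1]² → [0,1] a binary aggregation function having 1 as a left neutral element (A(1,x) = x for all x), and I a fuzzy implication satisfying (NP) (I(1,y) = y for all y). Let D, D' be fuzzy sets on U with D normal, and B a fuzzy set on a nonempty set V. Then the inferred conclusion B'_1(y) = sup_{x ∈ U} I(S(D,D'), A(D(x), B(y))) satisfies B ⊆ B'_1, i.e., B(y) ≤ B'_1(y) for all y ∈ V. -/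
/-- A similarity measure on the fuzzy sets of a universe `U` (Definition 2.14). -/
structure SimilarityMeasure (U : Type) where
  S : (U → unitInterval) → (U → unitInterval) → unitInterval
  symm : ∀ D D' : U → unitInterval, S D D' = S D' D
  eq_one_iff : ∀ D D' : U → unitInterval, S D D' = 1 ↔ D = D'
  eq_zero : ∀ D D' : U → unitInterval, S D D' = 0 → ∀ x : U, min (D x) (D' x) = 0
  le_min : ∀ D D' D'' : U → unitInterval, (∀ x, D x ≤ D' x) → (∀ x, D' x ≤ D'' x) →
    S D D'' ≤ min (S D D') (S D' D'')

/-- Lemma 5.1(i): if `A` has left neutral element `1`, `I` satisfies (NP) and `D` is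
normal, then `B ⊆ B'_1` where `B'_1(y) = sup_x I(S(D,D'), A(D(x),B(y)))`. -/
theorem stmt11 (U : Type) [Nonempty U] (S : SimilarityMeasure U)
    (A : unitInterval → unitInterval → unitInterval)
    (hAmono₁ : ∀ y : unitInterval, Monotone fun x => A x y)
    (hAmono₂ : ∀ x : unitInterval, Monotone (A x))
    (hA00 : A 0 0 = 0) (hA11 : A 1 1 = 1)
    (hneut : ∀ x : unitInterval, A 1 x = x)
    (Imp : unitInterval → unitInterval → unitInterval)
    (hImono₁ : ∀ y : unitInterval, Antitone fun x => Imp x y)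
    (hImono₂ : ∀ x : unitInterval, Monotone (Imp x))
    (hI00 : Imp 0 0 = 1) (hI11 : Imp 1 1 = 1) (hI10 : Imp 1 0 = 0)
    (hNP : ∀ y : unitInterval, Imp 1 y = y)
    (D D' : U → unitInterval) (hD : ∃ x₀ : U, D x₀ = 1)
    (V : Type) [Nonempty V] (B : V → unitInterval) :
    ∀ y : V, B y ≤ ⨆ x : U, Imp (S.S D D') (A (D x) (B y)) := by
  obtain ⟨x₀, hx₀⟩ := hD
  intro y
  -- At a point where `D` equals `1` the supremand is `Imp (S D D') (B y) ≥ Imp 1 (B y) = B y`.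
  calc B y = Imp 1 (B y) := (hNP _).symm
    _ ≤ Imp (S.S D D') (B y) := hImono₁ (B y) unitInterval.le_one'
    _ = Imp (S.S D D') (A (D x₀) (B y)) := by rw [hx₀, hneut]
    _ ≤ ⨆ x : U, Imp (S.S D D') (A (D x) (B y)) :=
      le_iSup (fun x => Imp (S.S D D') (A (D x) (B y))) x₀
end

section
/- Let U be a nonempty set, S a similarity measure on U, and I a fuzzy implication that is right-continuous in its second variable and satisfies (NP) (I(1,y) = y for all y). Let D, D' be fuzzy sets on U with D normal, and B a fuzzy set on a nonempty set V. Then the inferred conclusion B'_2(y) = inf_{x ∈ U} I(S(D,D'), I(D(x), B(y))) satisfies B ⊆ B'_2, i.e., B(y) ≤ B'_2(y) for all y ∈ V. -/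
/-- Lemma 5.1(ii): if `I` is right-continuous in its second variable, satisfies (NP),
and `D` is normal, then `B ⊆ B'_2` where `B'_2(y) = inf_x I(S(D,D'), I(D(x),B(y)))`. -/
theorem stmt12 (U : Type) [Nonempty U] (S : SimilarityMeasure U)
    (Imp : unitInterval → unitInterval → unitInterval)
    (hImono₁ : ∀ y : unitInterval, Antitone fun x => Imp x y)
    (hImono₂ : ∀ x : unitInterval, Monotone (Imp x))
    (hI00 : Imp 0 0 = 1) (hI11 : Imp 1 1 = 1) (hI10 : Imp 1 0 = 0)
    (hrc : ∀ (x z : unitInterval), z ≠ 1 → ContinuousWithinAt (Imp x) (Set.Ioi z) z)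
    (hNP : ∀ y : unitInterval, Imp 1 y = y)
    (D D' : U → unitInterval) (hD : ∃ x₀ : U, D x₀ = 1)
    (V : Type) [Nonempty V] (B : V → unitInterval) :
    ∀ y : V, B y ≤ ⨅ x : U, Imp (S.S D D') (Imp (D x) (B y)) := by
  intro y
  -- (NP) and antitonicity in the first variable give `b ≤ Imp a b` for all `a`.
  have key : ∀ a b : unitInterval, b ≤ Imp a b := fun a b =>
    (hNP b).symm.le.trans (hImono₁ b unitInterval.le_one')
  exact le_ciInf fun x => (key (D x) (B y)).trans (key _ _)
end

section
/- Let U, V be nonempty sets, S_U a similarity measure on U and S_V a similarity measure on V. Let I be a fuzzy implication that is right-continuous in its second variable and satisfies (NP) (I(1,y) = y for all y), and let A be a binary aggregation function having 1 as a left neutral element (A(1,x) = x for all x). Let D be a normal fuzzy set on U, B a fuzzy set on V, and let D', D'' be fuzzy sets on U with S_U(D,D') ≤ S_U(D,D''). Define B'_1(y) = sup_{x∈U} I(S_U(D,D'), A(D(x), B(y))) and B''_1(y) = sup_{x∈U} I(S_U(D,D''), A(D(x), B(y))), and similarly B'_2(y) = inf_{x∈U} I(S_U(D,D'), I(D(x),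 B(y))) and B''_2(y) = inf_{x∈U} I(S_U(D,D''), I(D(x), B(y))). Then S_V(B, B'_1) ≤ S_V(B, B''_1) and S_V(B, B'_2) ≤ S_V(B, B''_2). -/
/-- Lemma 5.2: if `I` is right-continuous in the second variable and satisfies (NP) and
`A` has left neutral element `1`, then the similarity-based methods producing `B'_1`
and `B'_2` satisfy (GMP2'): if `S(D,D') ≤ S(D,D'')` then `S(B,B'_1) ≤ S(B,B''_1)` and
`S(B,B'_2) ≤ S(B,B''_2)`. -/
theorem stmt13 (U V : Type) [Nonempty U] [Nonempty V]
    (SU : SimilarityMeasure U) (SV : SimilarityMeasure V)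
    (Imp : unitInterval → unitInterval → unitInterval)
    (hImono₁ : ∀ y : unitInterval, Antitone fun x => Imp x y)
    (hImono₂ : ∀ x : unitInterval, Monotone (Imp x))
    (hI00 : Imp 0 0 = 1) (hI11 : Imp 1 1 = 1) (hI10 : Imp 1 0 = 0)
    (hrc : ∀ (x z : unitInterval), z ≠ 1 → ContinuousWithinAt (Imp x) (Set.Ioi z) z)
    (hNP : ∀ y : unitInterval, Imp 1 y = y)
    (A : unitInterval → unitInterval → unitInterval)
    (hAmono₁ : ∀ y : unitInterval, Monotone fun x => A x y)
    (hAmono₂ : ∀ x : unitInterval, Monotone (A x))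
    (hA00 : A 0 0 = 0) (hA11 : A 1 1 = 1)
    (hneut : ∀ x : unitInterval, A 1 x = x)
    (D : U → unitInterval) (hD : ∃ x₀ : U, D x₀ = 1)
    (B : V → unitInterval)
    (D' D'' : U → unitInterval) (hS : SU.S D D' ≤ SU.S D D'') :
    SV.S B (fun y => ⨆ x : U, Imp (SU.S D D') (A (D x) (B y)))
      ≤ SV.S B (fun y => ⨆ x : U, Imp (SU.S D D'') (A (D x) (B y)))
    ∧ SV.S B (fun y => ⨅ x : U, Imp (SU.S D D') (Imp (D x) (B y)))
      ≤ SV.S B (fun y => ⨅ x : U, Imp (SU.S D D'') (Imp (D x) (B y))) := by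
  have hle : ∀ s t : unitInterval, t ≤ Imp s t := fun s t =>
    (hNP t).symm.le.trans (hImono₁ t unitInterval.le_one')
  obtain ⟨x₀, hx₀⟩ := hD
  refine ⟨(SV.le_min _ _ _ (fun y => ?_) fun y => ?_).trans (min_le_left _ _),
    (SV.le_min _ _ _ (fun y => ?_) fun y => ?_).trans (min_le_left _ _)⟩
  · refine le_trans ?_ (le_iSup (fun x : U => Imp (SU.S D D'') (A (D x) (B y))) x₀)
    simpa only [hx₀, hneut] using hle (SU.S D D'') (B y)
  · exact iSup_mono fun x => hImono₁ _ hS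
  · exact le_iInf fun x => (hle _ _).trans (hle _ _)
  · exact iInf_mono fun x => hImono₁ _ hS
end

section
/- Let U, V be nonempty sets, let A : [0,1]² → [0,1] be a binary aggregation function having 0 as a neutral element (A(0,x) = A(x,0) = x for all x ∈ [0,1]), let D be a normal fuzzy set on U with complement D^C(x) = 1 − D(x), let B be a fuzzy set on V, and let s ∈ [0,1] be a value with s = 0 (corresponding to the assumption S(D, D^C) = 0 for a similarity measure S). Then the inferred conclusion B'_3(y) = sup_{x ∈ U} A(s, A(D(x), B(y))) satisfies B'_3(y) = 1 for all y ∈ V. -/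
/-- Lemma 5.5: let `A` be an aggregation function having `0` as a neutral element and
let `D` be normal.  With `s = 0` (the similarity `S(D, D^C) = 0`), the inferred
conclusion `B'_3(y) = sup_x A(s, A(D(x), B(y)))` equals `1` everywhere, i.e. the
`B'_3` method satisfies (GMP3). -/
theorem stmt14 (U V : Type) [Nonempty U] [Nonempty V]
    (A : unitInterval → unitInterval → unitInterval)
    (hAmono₁ : ∀ y : unitInterval, Monotone fun x => A x y)
    (hAmono₂ : ∀ x : unitInterval, Monotone (A x))
    (hA00 : A 0 0 = 0) (hA11 : A 1 1 = 1)
    (hneut : ∀ x : unitInterval, A 0 x = x ∧ A x 0 = x)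
    (D : U → unitInterval) (hD : ∃ x₀ : U, D x₀ = 1)
    (B : V → unitInterval)
    (s : unitInterval) (hs : s = 0) :
    ∀ y : V, (⨆ x : U, A s (A (D x) (B y))) = 1 := by
  intro y
  obtain ⟨x₀, hx₀⟩ := hD
  subst hs
  -- At `x₀` the term equals `A 1 (B y)`, which lies above `A 1 0 = 1`.
  have hterm : A 0 (A (D x₀) (B y)) = 1 := by
    rw [(hneut _).1, hx₀]
    refine le_antisymm unitInterval.le_one' ?_
    calc (1 : unitInterval) = A 1 0 := ((hneut 1).2).symm
      _ ≤ A 1 (B y) := hAmono₂ 1 unitInterval.nonneg'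
  refine le_antisymm unitInterval.le_one' ?_
  calc (1 : unitInterval) = A 0 (A (D x₀) (B y)) := hterm.symm
    _ ≤ ⨆ x : U, A 0 (A (D x) (B y)) :=
      le_iSup (fun x : U => A 0 (A (D x) (B y))) x₀
end

section
/- Let U, V be nonempty sets, S a similarity measure on U, A : [0,1]² → [0,1] a binary aggregation function having 1 as a left neutral element (A(1,x) = x for all x), and I a fuzzy implication satisfying (NP) (I(1,y) = y for all y). Let D be a normal fuzzy set on U and B a fuzzy set on V. Then with D' = D the inferred conclusion satisfies B'_1(y) = sup_{x ∈ U} I(S(D,D), A(D(x), B(y))) = B(y) for all y ∈ V. -/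
/-- Lemma 5.6: if `A` has left neutral element `1`, `I` satisfies (NP) and `D` is
normal, then with `D' = D` the conclusion `B'_1(y) = sup_x I(S(D,D), A(D(x),B(y)))`
equals `B(y)`, i.e. the `B'_1` method satisfies (GMP4). -/
theorem stmt15 (U V : Type) [Nonempty U] [Nonempty V] (S : SimilarityMeasure U)
    (A : unitInterval → unitInterval → unitInterval)
    (hAmono₁ : ∀ y : unitInterval, Monotone fun x => A x y)
    (hAmono₂ : ∀ x : unitInterval, Monotone (A x))
    (hA00 : A 0 0 = 0) (hA11 : A 1 1 = 1)
    (hneut : ∀ x : unitInterval, A 1 x = x)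
    (Imp : unitInterval → unitInterval → unitInterval)
    (hImono₁ : ∀ y : unitInterval, Antitone fun x => Imp x y)
    (hImono₂ : ∀ x : unitInterval, Monotone (Imp x))
    (hI00 : Imp 0 0 = 1) (hI11 : Imp 1 1 = 1) (hI10 : Imp 1 0 = 0)
    (hNP : ∀ y : unitInterval, Imp 1 y = y)
    (D : U → unitInterval) (hD : ∃ x₀ : U, D x₀ = 1)
    (B : V → unitInterval) :
    ∀ y : V, (⨆ x : U, Imp (S.S D D) (A (D x) (B y))) = B y := by
  intro y
  obtain ⟨x₀, hx₀⟩ := hD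
  have hS : S.S D D = 1 := (S.eq_one_iff D D).2 rfl
  simp only [hS, hNP]
  apply le_antisymm
  · refine ciSup_le fun x => ?_
    calc A (D x) (B y) ≤ A 1 (B y) := hAmono₁ (B y) unitInterval.le_one'
      _ = B y := hneut (B y)
  -- The supremum is attained at the point of normality `x₀`.
  · refine le_ciSup_of_le (OrderTop.bddAbove _) x₀ ?_
    rw [hx₀, hneut]
end

section
/- Let U, V be nonempty sets, S a similarity measure on U, and I a fuzzy implication that is right-continuous in its second variable and satisfies (NP) (I(1,y) = y for all y). Let D be a normal fuzzy set on U and B a fuzzy set on V. Then with D' = D the inferred conclusion satisfies B'_2(y) = inf_{x ∈ U} I(S(D,D), I(D(x), B(y))) = B(y) for all y ∈ V. -/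
/-- Lemma 5.7: if `I` is right-continuous in its second variable, satisfies (NP) and
`D` is normal, then with `D' = D` the conclusion
`B'_2(y) = inf_x I(S(D,D), I(D(x),B(y)))` equals `B(y)`, i.e. the `B'_2` method
satisfies (GMP4). -/
theorem stmt16 (U V : Type) [Nonempty U] [Nonempty V] (S : SimilarityMeasure U)
    (Imp : unitInterval → unitInterval → unitInterval)
    (hImono₁ : ∀ y : unitInterval, Antitone fun x => Imp x y)
    (hImono₂ : ∀ x : unitInterval, Monotone (Imp x))
    (hI00 : Imp 0 0 = 1) (hI11 : Imp 1 1 = 1) (hI10 : Imp 1 0 = 0)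
    (hrc : ∀ (x z : unitInterval), z ≠ 1 → ContinuousWithinAt (Imp x) (Set.Ioi z) z)
    (hNP : ∀ y : unitInterval, Imp 1 y = y)
    (D : U → unitInterval) (hD : ∃ x₀ : U, D x₀ = 1)
    (B : V → unitInterval) :
    ∀ y : V, (⨅ x : U, Imp (S.S D D) (Imp (D x) (B y))) = B y := by
  intro y
  obtain ⟨x₀, hx₀⟩ := hD
  -- `S(D, D) = 1`, so (NP) removes the outer implication.
  have hS : S.S D D = 1 := (S.eq_one_iff D D).2 rfl
  simp only [hS, hNP]
  apply le_antisymm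
  -- By normality the infimum is at most its term at `x₀`, where `D x₀ = 1`.
  · calc (⨅ x : U, Imp (D x) (B y)) ≤ Imp (D x₀) (B y) := iInf_le _ x₀
      _ = B y := by rw [hx₀, hNP]
  -- Antitonicity in the first variable: `B y = Imp 1 (B y) ≤ Imp (D x) (B y)`.
  · refine le_iInf fun x => ?_
    calc B y = Imp 1 (B y) := (hNP _).symm
      _ ≤ Imp (D x) (B y) := hImono₁ (B y) unitInterval.le_one'
end

section
/- Let U, V be nonempty sets, S a similarity measure on U, and A : [0,1]² → [0,1] a binary aggregation function having 1 as a left neutral element (A(1,x) = x for all x). Let D be a normal fuzzy set on U and B a fuzzy set on V. Then with D' = D the inferred conclusion satisfies B'_3(y) = sup_{x ∈ U} A(S(D,D), A(D(x), B(y))) = B(y) for all y ∈ V. -/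
/-- Lemma 5.8: if `A` has left neutral element `1` and `D` is normal, then with
`D' = D` the conclusion `B'_3(y) = sup_x A(S(D,D), A(D(x),B(y)))` equals `B(y)`,
i.e. the `B'_3` method satisfies (GMP4). -/
theorem stmt17 (U V : Type) [Nonempty U] [Nonempty V] (S : SimilarityMeasure U)
    (A : unitInterval → unitInterval → unitInterval)
    (hAmono₁ : ∀ y : unitInterval, Monotone fun x => A x y)
    (hAmono₂ : ∀ x : unitInterval, Monotone (A x))
    (hA00 : A 0 0 = 0) (hA11 : A 1 1 = 1)
    (hneut : ∀ x : unitInterval, A 1 x = x)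
    (D : U → unitInterval) (hD : ∃ x₀ : U, D x₀ = 1)
    (B : V → unitInterval) :
    ∀ y : V, (⨆ x : U, A (S.S D D) (A (D x) (B y))) = B y := by
  intro y
  obtain ⟨x₀, hx₀⟩ := hD
  -- `S(D, D) = 1` by reflexivity, so neutrality of `1` removes the outer aggregation.
  simp only [(S.eq_one_iff D D).2 rfl, hneut]
  apply le_antisymm
  · refine iSup_le fun x => ?_
    calc A (D x) (B y) ≤ A 1 (B y) := hAmono₁ (B y) unitInterval.le_one'
      _ = B y := hneut _
  -- The bound is attained at a point where `D` takes the value `1`.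
  · calc B y = A (D x₀) (B y) := by rw [hx₀, hneut]
      _ ≤ ⨆ x : U, A (D x) (B y) := le_iSup (fun x => A (D x) (B y)) x₀
end

section
/- Let I : [0,1]² → [0,1] be a fuzzy implication that is right-continuous in its second variable and satisfies I(1,y) < 1 for all y ∈ [0,1), and let A_I(x,y) = inf{z ∈ [0,1] : I(x,z) ≥ y}. Let U, V be nonempty sets, D, D' fuzzy sets on U and B a fuzzy set on V. For a fuzzy set C on V define the quintuple-implication expression M_C(x,y) = I(I(D(x),B(y)), I(I(D'(x),D(x)), I(D'(x),C(y)))). Define B'(y) = sup_{x ∈ U} A_I(D'(x), A_I(I(D'(x),D(x)), A_I(I(D(x),B(y)), 1))). Then B' is the quintuple implication principle (QIP) solution of the fuzzy modus ponens problem: (a) M_{B'}(x,y) = 1 for all x ∈ U, y ∈ V; (b) for every fuzzy set C on V such that M_C(x,y) = 1 for all x ∈ U, y ∈ V, one has B' ⊆ C, i.e., B'(y) ≤ C(y) for all y ∈ V. -/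
/-- The adjunction between `A_I(x, ·)` and `I(x, ·)`. -/
theorem coresid_le_iff (Imp : unitInterval → unitInterval → unitInterval)
    (hImono₁ : ∀ y : unitInterval, Antitone fun x => Imp x y)
    (hImono₂ : ∀ x : unitInterval, Monotone (Imp x))
    (hI11 : Imp 1 1 = 1)
    (hrc : ∀ (x z : unitInterval), z ≠ 1 → ContinuousWithinAt (Imp x) (Set.Ioi z) z)
    (x y z : unitInterval) : coresid Imp x y ≤ z ↔ y ≤ Imp x z := by
  refine ⟨fun h => ?_, fun h => sInf_le h⟩
  refine le_trans ?_ (hImono₂ x h)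
  by_cases hm : coresid Imp x y = 1
  · rw [hm]
    have h1 : Imp 1 1 ≤ Imp x 1 := hImono₁ 1 unitInterval.le_one'
    rw [hI11] at h1
    exact unitInterval.le_one'.trans h1
  · have hlt1 : coresid Imp x y < 1 := lt_of_le_of_ne unitInterval.le_one' hm
    have : (nhdsWithin (coresid Imp x y) (Set.Ioi (coresid Imp x y))).NeBot :=
      nhdsGT_neBot_of_exists_gt ⟨1, hlt1⟩
    refine ge_of_tendsto (hrc x _ hm) ?_
    filter_upwards [self_mem_nhdsWithin] with w hw
    obtain ⟨s, hs, hsw⟩ := sInf_lt_iff.1 (show sInf {z | y ≤ Imp x z} < w from hw)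
    exact le_trans hs (hImono₂ x hsw.le)

/-- Theorem 6.1 (FMP case): let `I` be a fuzzy implication, right-continuous in its
second variable, with `I(1,y) < 1` for all `y < 1`.  Then
`B'(y) = sup_x A_I(D'(x), A_I(I(D'(x),D(x)), A_I(I(D(x),B(y)), 1)))`
is the QIP solution of the FMP problem: the quintuple implication expression attains
the value `1` everywhere at `B'`, and `B'` is the smallest fuzzy set on `V` with this
property. -/
theorem stmt18 (Imp : unitInterval → unitInterval → unitInterval)
    (hImono₁ : ∀ y : unitInterval, Antitone fun x => Imp x y)
    (hImono₂ : ∀ x : unitInterval, Monotone (Imp x))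
    (hI00 : Imp 0 0 = 1) (hI11 : Imp 1 1 = 1) (hI10 : Imp 1 0 = 0)
    (hrc : ∀ (x z : unitInterval), z ≠ 1 → ContinuousWithinAt (Imp x) (Set.Ioi z) z)
    (hlt : ∀ y : unitInterval, y < 1 → Imp 1 y < 1)
    (U V : Type) [Nonempty U] [Nonempty V]
    (D D' : U → unitInterval) (B : V → unitInterval) :
    -- (a) the quintuple implication expression attains its maximum 1 at `B'`
    (∀ (x : U) (y : V),
      Imp (Imp (D x) (B y)) (Imp (Imp (D' x) (D x)) (Imp (D' x)
        (⨆ x' : U, coresid Imp (D' x') (coresid Imp (Imp (D' x') (D x'))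
          (coresid Imp (Imp (D x') (B y)) 1))))) = 1)
    -- (b) `B'` is the smallest such fuzzy set
    ∧ (∀ C : V → unitInterval,
      (∀ (x : U) (y : V),
        Imp (Imp (D x) (B y)) (Imp (Imp (D' x) (D x)) (Imp (D' x) (C y))) = 1) →
      ∀ y : V,
        (⨆ x : U, coresid Imp (D' x) (coresid Imp (Imp (D' x) (D x))
          (coresid Imp (Imp (D x) (B y)) 1))) ≤ C y) := by
  have adj := coresid_le_iff Imp hImono₁ hImono₂ hI11 hrc
  have key : ∀ a b c t : unitInterval,
      Imp a (Imp b (Imp c t)) = 1 ↔ coresid Imp c (coresid Imp b (coresid Imp a 1)) ≤ t := by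
    intro a b c t
    rw [adj, adj, adj]
    exact ⟨fun h => h.ge, fun h => le_antisymm unitInterval.le_one' h⟩
  constructor
  · intro x y
    rw [key]
    exact le_iSup (fun x' : U => coresid Imp (D' x') (coresid Imp (Imp (D' x') (D x'))
      (coresid Imp (Imp (D x') (B y)) 1))) x
  · intro C hC y
    exact iSup_le fun x => (key _ _ _ _).1 (hC x y)
end

section
/- Let I : [0,1]² → [0,1] be a fuzzy implication that is right-continuous in its second variable and satisfies (NP) (I(1,y) = y for all y) and (OP) (I(x,y) = 1 if and only if x ≤ y), and let A_I(x,y) = inf{z ∈ [0,1] : I(x,z) ≥ y}. Let U, V be nonempty sets, D a normal fuzzy set on U and B a fuzzy set on V. Then the QIP solution of fuzzy modus ponens with input D' = D reproduces B exactly: sup_{x ∈ U} A_I(D(x), A_I(I(D(x),D(x)), A_I(I(D(x),B(y)), 1))) = B(y) for all y ∈ V. -/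
theorem coresid_one_right {Imp : unitInterval → unitInterval → unitInterval}
    (hOP : ∀ x y : unitInterval, Imp x y = 1 ↔ x ≤ y) (a : unitInterval) :
    coresid Imp a 1 = a := by
  have h : {z : unitInterval | 1 ≤ Imp a z} = Set.Ici a := by
    ext z
    rw [Set.mem_ofPred_eq, Set.mem_Ici, ← hOP a z]
    exact ⟨fun h => le_antisymm unitInterval.le_one' h, fun h => h.ge⟩
  rw [coresid, h, csInf_Ici]

theorem coresid_one_left {Imp : unitInterval → unitInterval → unitInterval}
    (hNP : ∀ y : unitInterval, Imp 1 y = y) (b : unitInterval) :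
    coresid Imp 1 b = b := by
  have h : {z : unitInterval | b ≤ Imp 1 z} = Set.Ici b := by
    ext z
    rw [Set.mem_ofPred_eq, Set.mem_Ici, hNP]
  rw [coresid, h, csInf_Ici]

/-- Lemma 6.6: if `I` is right-continuous in its second variable and satisfies (NP)
and (IP/OP), and `D` is normal, then the QIP solution of FMP with input `D' = D`
reproduces `B` exactly, i.e. the AQIP method satisfies (GMP4). -/
theorem stmt19 (Imp : unitInterval → unitInterval → unitInterval)
    (hImono₁ : ∀ y : unitInterval, Antitone fun x => Imp x y)
    (hImono₂ : ∀ x : unitInterval, Monotone (Imp x))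
    (hI00 : Imp 0 0 = 1) (hI11 : Imp 1 1 = 1) (hI10 : Imp 1 0 = 0)
    (hrc : ∀ (x z : unitInterval), z ≠ 1 → ContinuousWithinAt (Imp x) (Set.Ioi z) z)
    (hNP : ∀ y : unitInterval, Imp 1 y = y)
    (hOP : ∀ x y : unitInterval, Imp x y = 1 ↔ x ≤ y)
    (U V : Type) [Nonempty U] [Nonempty V]
    (D : U → unitInterval) (hD : ∃ x₀ : U, D x₀ = 1)
    (B : V → unitInterval) :
    ∀ y : V,
      (⨆ x : U, coresid Imp (D x) (coresid Imp (Imp (D x) (D x))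
        (coresid Imp (Imp (D x) (B y)) 1))) = B y := by
  intro y
  have hterm : ∀ x : U, coresid Imp (D x) (coresid Imp (Imp (D x) (D x))
      (coresid Imp (Imp (D x) (B y)) 1)) = coresid Imp (D x) (Imp (D x) (B y)) := fun x => by
    rw [coresid_one_right hOP, (hOP (D x) (D x)).2 le_rfl, coresid_one_left hNP]
  simp only [hterm]
  apply le_antisymm
  · exact iSup_le fun x => sInf_le (le_refl (Imp (D x) (B y)))
  · obtain ⟨x₀, hx₀⟩ := hD
    refine le_iSup_of_le x₀ ?_
    rw [hx₀, hNP, coresid_one_left hNP]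
end
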